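/- Let $f=\sum_{v\in\mathbb{Z}_{\ge 0}^n} a_v x^v\in\mathbb{C}[x_1,\dots,x_n]$ and let its Newton polyhedron at infinity $\Gamma_\infty(f)$ be the convex hull of $\{0\}\cup\{v : a_v\neq 0\}$ in $\mathbb{R}^n$. For $u\in\mathbb{R}^n$ let $\gamma_u=\{v\in\Gamma_\infty(f) : \langle u,v\rangle=\min_{w\in\Gamma_\infty(f)}\langle u,w\rangle\}$. A face of $\Gamma_\infty(f)$ is a subset of the form $\gamma_u$ with $u\in\mathbb{R}^n$, its dimension is that of its affine span, and a facet is a face of dimension $n-1$. A face $\gamma$ with $0\in\gamma$ is called atypical if there is a facet $\Gamma\supseteq\gamma$ such that every nonzero $u\in\mathbb{R}^n$ with $\gamma_u=\Gamma$ lies outside the first quadrant $\mathbb{R}_{\ge 0}^n$. For a face $\gamma$, let $\sigma(\gamma)$ be the closure in $\mathbb{R}^n$ of $\{u\in\mathbb{R}^n : \gamma_u=\gamma\}$, i.e. the cone corresponding to $\gamma$ in the dual fan of $\Gamma_\infty(f)$. Assume that $\dim\Gamma_\infty(f)=n$ and let $\gamma$ be a face of $\Gamma_\infty(f)$ with $0\in\gamma$.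 Then $\gamma$ is atypical if and only if $\sigma(\gamma)$ is not contained in $\mathbb{R}_{\ge 0}^n$. -/

import Mathlib

noncomputable section

/-- The support of a polynomial, viewed as a subset of `ℝⁿ`. -/
def realSupp {n : ℕ} (f : MvPolynomial (Fin n) ℂ) : Set (Fin n → ℝ) :=
  (fun v : Fin n →₀ ℕ => fun i => (v i : ℝ)) '' {v | MvPolynomial.coeff v f ≠ 0}

/-- The Newton polyhedron at infinity `Γ_∞(f)`. -/
def NPinf {n : ℕ} (f : MvPolynomial (Fin n) ℂ) : Set (Fin n → ℝ) :=
  convexHull ℝ ({0} ∪ realSupp f)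

/-- The supporting face `γ_u` of `u` in `Γ_∞(f)`: the points of `Γ_∞(f)` at which the
linear form `⟨u, ·⟩` attains its minimum over `Γ_∞(f)`. -/
def suppFace {n : ℕ} (f : MvPolynomial (Fin n) ℂ) (u : Fin n → ℝ) : Set (Fin n → ℝ) :=
  {v | v ∈ NPinf f ∧ ∀ w ∈ NPinf f, dotProduct u v ≤ dotProduct u w}

/-- A face of `Γ_∞(f)` is any set of the form `γ_u`. -/
def IsFaceOf {n : ℕ} (f : MvPolynomial (Fin n) ℂ) (γ : Set (Fin n → ℝ)) : Prop :=
  ∃ u : Fin n → ℝ, suppFace f u = γ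

/-- Dimension of a (nonempty) subset of `ℝⁿ`: the dimension of its affine span. -/
def setDim {n : ℕ} (s : Set (Fin n → ℝ)) : ℕ :=
  Module.finrank ℝ (affineSpan ℝ s).direction

/-- A facet of `Γ_∞(f)` is a face of dimension `n - 1`, an integer subtraction, hence written
additively: for `n = 0` there are no facets. -/
def IsFacetOf {n : ℕ} (f : MvPolynomial (Fin n) ℂ) (Γ : Set (Fin n → ℝ)) : Prop :=
  IsFaceOf f Γ ∧ setDim Γ + 1 = n

/-- The first quadrant `ℝ_{≥0}ⁿ`. -/
def firstQuadrant (n : ℕ) : Set (Fin n → ℝ) := {u | ∀ i, 0 ≤ u i}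

/-- A face `γ` of `Γ_∞(f)` with `0 ∈ γ` is atypical if some facet of `Γ_∞(f)`
containing `γ` has all its nonzero inner conormal vectors outside `ℝ_{≥0}ⁿ`. -/
def IsAtypicalFace {n : ℕ} (f : MvPolynomial (Fin n) ℂ) (γ : Set (Fin n → ℝ)) : Prop :=
  IsFaceOf f γ ∧ (0 : Fin n → ℝ) ∈ γ ∧
    ∃ Γ : Set (Fin n → ℝ), IsFacetOf f Γ ∧ γ ⊆ Γ ∧
      ∀ u : Fin n → ℝ, u ≠ 0 → suppFace f u = Γ → u ∉ firstQuadrant n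

/-- The cone `σ(γ)` of the dual fan of `Γ_∞(f)` corresponding to the face `γ`. -/
def sigmaCone {n : ℕ} (f : MvPolynomial (Fin n) ℂ) (γ : Set (Fin n → ℝ)) : Set (Fin n → ℝ) :=
  closure {u : Fin n → ℝ | suppFace f u = γ}

end

/-! Let `P` be a full-dimensional polytope and `γ` a nonempty face of it. The cone `σ(γ)` is the
normal cone of `γ`: the `u` with `γ ⊆ γ_u`. It is pointed, and a suitable hyperplane `⟨u, q⟩ = 1`
cuts it in a compact convex base, the closed convex hull of its extreme points by Krein–Milman; so a
closed convex cone not containing `σ(γ)` misses some extreme point `u`. If `w` is constant on `γ_u`,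
then so is `w₀ = w - ⟨w, q⟩ u`, and `u ± ε w₀` stays in the base for small `ε`, so `w₀ = 0` by
extremality. Hence `γ_u` is a facet, and its nonzero conormal vectors are the positive multiples
of `u`. -/

open Module Topology

section DotProductOrthogonal

variable {K ι : Type*} [Field K] [Fintype ι]

/-- The orthogonal complement of `V` for the dot product: the annihilator of `V`, with linear forms
represented by vectors. -/
def dotProductOrthogonal (V : Submodule K (ι → K)) : Submodule K (ι → K) :=
  V.dualAnnihilator.comap (dotProductBilin K K)

lemma mem_dotProductOrthogonal {V : Submodule K (ι → K)} {u : ι → K} :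
    u ∈ dotProductOrthogonal V ↔ ∀ v ∈ V, u ⬝ᵥ v = 0 := by
  simp [dotProductOrthogonal, Submodule.mem_dualAnnihilator]

lemma finrank_add_finrank_dotProductOrthogonal (V : Submodule K (ι → K)) :
    finrank K V + finrank K (dotProductOrthogonal V) = Fintype.card ι := by
  classical
  have hmap : (dotProductOrthogonal V).map (dotProductEquiv K ι).toLinearMap = V.dualAnnihilator :=
    Submodule.map_comap_eq_of_surjective (dotProductEquiv K ι).surjective _
  rw [← (dotProductEquiv K ι).finrank_map_eq (dotProductOrthogonal V), hmap,
    Subspace.finrank_add_finrank_dualAnnihilator_eq, finrank_fintype_fun_eq_card]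

lemma mem_dotProductOrthogonal_vectorSpan {s : Set (ι → K)} {u : ι → K} :
    u ∈ dotProductOrthogonal (vectorSpan K s) ↔ ∀ v ∈ s, ∀ w ∈ s, u ⬝ᵥ v = u ⬝ᵥ w := by
  have hle : vectorSpan K s ≤ LinearMap.ker (dotProductBilin K K u) ↔
      ∀ v ∈ s, ∀ w ∈ s, u ⬝ᵥ v = u ⬝ᵥ w := by
    rw [vectorSpan_def, Submodule.span_le, Set.vsub_subset_iff]
    simp [dotProduct_sub, sub_eq_zero]
  exact mem_dotProductOrthogonal.trans hle

lemma eq_zero_of_forall_dotProduct_eq {s : Set (ι → K)} (hs : vectorSpan K s = ⊤) {u : ι → K}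
    {c : K} (h : ∀ v ∈ s, u ⬝ᵥ v = c) : u = 0 := by
  have hu : u ∈ dotProductOrthogonal (vectorSpan K s) :=
    mem_dotProductOrthogonal_vectorSpan.2 fun v hv w hw => (h v hv).trans (h w hw).symm
  rw [hs, mem_dotProductOrthogonal] at hu
  exact dotProduct_eq_zero u fun v => hu v Submodule.mem_top

end DotProductOrthogonal

section MinFace

variable {ι : Type*} [Fintype ι] {P : Set (ι → ℝ)} {u v w : ι → ℝ}

/-- The supporting face of `u` in `P`: the points of `P` minimizing `⟨u, ·⟩`. For `P = Γ_∞(f)` this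
is `γ_u`, the set `suppFace f u`. -/
def minFace (P : Set (ι → ℝ)) (u : ι → ℝ) : Set (ι → ℝ) :=
  {v | v ∈ P ∧ ∀ w ∈ P, u ⬝ᵥ v ≤ u ⬝ᵥ w}

lemma minFace_zero (P : Set (ι → ℝ)) : minFace P 0 = P := by
  simp [minFace]

lemma dotProduct_eq_of_mem_minFace (hv : v ∈ minFace P u) (hw : w ∈ minFace P u) :
    u ⬝ᵥ v = u ⬝ᵥ w :=
  le_antisymm (hv.2 w hw.1) (hw.2 v hv.1)

lemma mem_minFace_of_dotProduct_eq (hv : v ∈ minFace P u) (hw : w ∈ P) (h : u ⬝ᵥ w = u ⬝ᵥ v) :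
    w ∈ minFace P u :=
  ⟨hw, fun x hx => h.trans_le (hv.2 x hx)⟩

lemma mem_dotProductOrthogonal_vectorSpan_minFace (P : Set (ι → ℝ)) (u : ι → ℝ) :
    u ∈ dotProductOrthogonal (vectorSpan ℝ (minFace P u)) :=
  mem_dotProductOrthogonal_vectorSpan.2 fun _ hv _ hw => dotProduct_eq_of_mem_minFace hv hw

lemma mem_minFace_convexHull_iff {S : Set (ι → ℝ)} :
    v ∈ minFace (convexHull ℝ S) u ↔ v ∈ convexHull ℝ S ∧ ∀ s ∈ S, u ⬝ᵥ v ≤ u ⬝ᵥ s := by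
  refine and_congr_right fun _ => ⟨fun h s hs => h s (subset_convexHull ℝ S hs), fun h => ?_⟩
  exact convexHull_min h (convex_halfSpace_ge (dotProductBilin ℝ ℝ u).isLinear _)

lemma minFace_add_smul {ε : ℝ} (hε : 0 < ε) (hne : (minFace P u ∩ minFace P v).Nonempty) :
    minFace P (u + ε • v) = minFace P u ∩ minFace P v := by
  obtain ⟨p, hpu, hpv⟩ := hne
  ext x
  simp only [minFace, Set.mem_inter_iff, Set.mem_ofPred_eq, add_dotProduct, smul_dotProduct,
    smul_eq_mul] at hpu hpv ⊢
  constructor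
  · rintro ⟨hx, hmin⟩
    have hle : u ⬝ᵥ x + ε * (v ⬝ᵥ x) ≤ u ⬝ᵥ p + ε * (v ⬝ᵥ p) := hmin p hpu.1
    have hu : u ⬝ᵥ x ≤ u ⬝ᵥ p := by
      linarith [mul_le_mul_of_nonneg_left (hpv.2 x hx) hε.le]
    have hv : v ⬝ᵥ x ≤ v ⬝ᵥ p := le_of_mul_le_mul_left (by linarith [hpu.2 x hx]) hε
    exact ⟨⟨hx, fun w hw => hu.trans (hpu.2 w hw)⟩, hx, fun w hw => hv.trans (hpv.2 w hw)⟩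
  · rintro ⟨⟨hx, hu⟩, -, hv⟩
    exact ⟨hx, fun w hw => add_le_add (hu w hw) (mul_le_mul_of_nonneg_left (hv w hw) hε.le)⟩

lemma eventually_minFace_subset_minFace_add_smul {S : Finset (ι → ℝ)}
    (hw : w ∈ dotProductOrthogonal (vectorSpan ℝ (minFace (convexHull ℝ S) u))) :
    ∀ᶠ ε in 𝓝 (0 : ℝ), minFace (convexHull ℝ S) u ⊆ minFace (convexHull ℝ S) (u + ε • w) := by
  obtain hempty | ⟨p, hp⟩ := (minFace (convexHull ℝ S) u).eq_empty_or_nonempty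
  · simp [hempty]
  rw [mem_dotProductOrthogonal_vectorSpan] at hw
  have hvertex : ∀ s ∈ S, ∀ᶠ ε in 𝓝 (0 : ℝ), (u + ε • w) ⬝ᵥ p ≤ (u + ε • w) ⬝ᵥ s := by
    intro s hs
    simp only [add_dotProduct, smul_dotProduct, smul_eq_mul]
    have hsP : s ∈ convexHull ℝ (S : Set (ι → ℝ)) := subset_convexHull ℝ _ hs
    obtain heq | hlt := (hp.2 s hsP).eq_or_lt
    · have hsF := mem_minFace_of_dotProduct_eq hp hsP heq.symm
      exact .of_forall fun ε => by rw [heq, hw s hsF p hp]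
    · exact (ContinuousAt.eventually_lt (by fun_prop) (by fun_prop) (by simpa using hlt)).mono
        fun _ => le_of_lt
  filter_upwards [(Finset.eventually_all S).2 hvertex] with ε hε v hv
  refine mem_minFace_convexHull_iff.2 ⟨hv.1, fun s hs => le_trans (le_of_eq ?_) (hε s hs)⟩
  simp only [add_dotProduct, smul_dotProduct, dotProduct_eq_of_mem_minFace hv hp, hw v hv p hp]

lemma exists_pos_smul_eq_of_minFace_eq (hP : vectorSpan ℝ P = ⊤)
    (hfacet : finrank ℝ (vectorSpan ℝ (minFace P u)) + 1 = Fintype.card ι)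
    (hne : (minFace P u).Nonempty) (hu : u ≠ 0) (hv : v ≠ 0) (h : minFace P v = minFace P u) :
    ∃ c : ℝ, 0 < c ∧ c • u = v := by
  obtain ⟨p, hpu⟩ := hne
  have hpv : p ∈ minFace P v := h ▸ hpu
  obtain ⟨c, rfl⟩ : ∃ c : ℝ, c • u = v := by
    have hline : finrank ℝ (dotProductOrthogonal (vectorSpan ℝ (minFace P u))) = 1 := by
      have := finrank_add_finrank_dotProductOrthogonal (vectorSpan ℝ (minFace P u))
      omega
    obtain ⟨c, hc⟩ := exists_smul_eq_of_finrank_eq_one hline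
      (x := ⟨u, mem_dotProductOrthogonal_vectorSpan_minFace P u⟩) (by simpa using hu)
      ⟨v, h ▸ mem_dotProductOrthogonal_vectorSpan_minFace P v⟩
    exact ⟨c, congrArg Subtype.val hc⟩
  obtain ⟨x, hx, hpx⟩ : ∃ x ∈ P, u ⬝ᵥ p < u ⬝ᵥ x := by
    by_contra! hle
    exact hu (eq_zero_of_forall_dotProduct_eq hP fun x hx => (hle x hx).antisymm (hpu.2 x hx))
  have hc : c * (u ⬝ᵥ p) ≤ c * (u ⬝ᵥ x) := by simpa using hpv.2 x hx
  refine ⟨c, lt_of_le_of_ne ?_ (Ne.symm (left_ne_zero_of_smul hv)), rfl⟩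
  by_contra! hneg
  exact (mul_lt_mul_of_neg_left hpx hneg).not_ge hc

end MinFace

section NormalCone

variable {ι : Type*} [Fintype ι] {P γ : Set (ι → ℝ)} {u w p q : ι → ℝ}

/-- The normal cone of `γ` in `P`: the vectors whose supporting face contains `γ`. For a nonempty
face `γ` of `Γ_∞(f)` this is `σ(γ)`. -/
def normalCone (P γ : Set (ι → ℝ)) : Set (ι → ℝ) :=
  {u | γ ⊆ minFace P u}

lemma isClosed_normalCone (P γ : Set (ι → ℝ)) : IsClosed (normalCone P γ) := by
  have hinter : normalCone P γ =
      ⋂ v ∈ γ, {_u | v ∈ P} ∩ ⋂ w ∈ P, {u : ι → ℝ | u ⬝ᵥ v ≤ u ⬝ᵥ w} := by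
    ext u
    simp [normalCone, minFace, Set.subset_def]
  rw [hinter]
  refine isClosed_biInter fun v _ => isClosed_const.inter (isClosed_biInter fun w _ => ?_)
  exact isClosed_le (by fun_prop) (by fun_prop)

lemma smul_mem_normalCone (hu : u ∈ normalCone P γ) {c : ℝ} (hc : 0 ≤ c) :
    c • u ∈ normalCone P γ := fun v hv => by
  refine ⟨(hu hv).1, fun w hw => ?_⟩
  simpa only [smul_dotProduct] using smul_le_smul_of_nonneg_left ((hu hv).2 w hw) hc

lemma add_mem_normalCone (hu : u ∈ normalCone P γ) (hw : w ∈ normalCone P γ) :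
    u + w ∈ normalCone P γ := fun v hv => by
  refine ⟨(hu hv).1, fun x hx => ?_⟩
  simpa only [add_dotProduct] using add_le_add ((hu hv).2 x hx) ((hw hv).2 x hx)

lemma convex_normalCone (P γ : Set (ι → ℝ)) : Convex ℝ (normalCone P γ) :=
  fun _ hu _ hv _ _ ha hb _ =>
    add_mem_normalCone (smul_mem_normalCone hu ha) (smul_mem_normalCone hv hb)

lemma closure_setOf_minFace_eq (hne : (minFace P u).Nonempty) :
    closure {v | minFace P v = minFace P u} = normalCone P (minFace P u) := by
  refine (closure_minimal (fun v hv => hv.ge) (isClosed_normalCone P _)).antisymm fun v hv => ?_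
  have hlim : Filter.Tendsto (fun ε : ℝ => v + ε • u) (𝓝[>] 0) (𝓝 v) := by
    have hcont : Continuous fun ε : ℝ => v + ε • u := by fun_prop
    simpa using (hcont.tendsto 0).mono_left nhdsWithin_le_nhds
  refine mem_closure_of_tendsto hlim ?_
  filter_upwards [self_mem_nhdsWithin] with ε hε
  have hinter : minFace P v ∩ minFace P u = minFace P u := Set.inter_eq_right.2 hv
  exact (minFace_add_smul hε (hinter.symm ▸ hne)).trans hinter

/-- The section of the normal cone of `γ` by the hyperplane `⟨u, q⟩ = 1`, used as a base of it. -/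
def normalSlice (P γ : Set (ι → ℝ)) (q : ι → ℝ) : Set (ι → ℝ) :=
  {u | u ∈ normalCone P γ ∧ u ⬝ᵥ q = 1}

lemma isClosed_normalSlice (P γ : Set (ι → ℝ)) (q : ι → ℝ) : IsClosed (normalSlice P γ q) :=
  (isClosed_normalCone P γ).inter (isClosed_eq (by fun_prop) continuous_const)

lemma convex_normalSlice (P γ : Set (ι → ℝ)) (q : ι → ℝ) : Convex ℝ (normalSlice P γ q) :=
  (convex_normalCone P γ).inter
    (convex_hyperplane ((dotProductBilin ℝ ℝ).flip q).isLinear 1)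

variable {S : Finset (ι → ℝ)}

lemma dotProduct_sub_nonneg_of_mem_normalCone (hp : p ∈ γ)
    (hu : u ∈ normalCone (convexHull ℝ S) γ) {s : ι → ℝ} (hs : s ∈ S) : 0 ≤ u ⬝ᵥ (s - p) := by
  rw [dotProduct_sub, sub_nonneg]
  exact (hu hp).2 s (subset_convexHull ℝ _ hs)

lemma dotProduct_sum_sub_pos (hS : vectorSpan ℝ (S : Set (ι → ℝ)) = ⊤) (hp : p ∈ γ)
    (hu : u ∈ normalCone (convexHull ℝ S) γ) (hu0 : u ≠ 0) : 0 < u ⬝ᵥ ∑ s ∈ S, (s - p) := by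
  have hnonneg := fun s => dotProduct_sub_nonneg_of_mem_normalCone hp hu (s := s)
  rw [dotProduct_sum]
  refine Finset.sum_pos' hnonneg ?_
  by_contra! hnonpos
  refine hu0 (eq_zero_of_forall_dotProduct_eq (c := u ⬝ᵥ p) hS fun s hs => sub_eq_zero.1 ?_)
  rw [← dotProduct_sub]
  exact (hnonpos s hs).antisymm (hnonneg s hs)

lemma isCompact_normalSlice (hS : vectorSpan ℝ (S : Set (ι → ℝ)) = ⊤) (hp : p ∈ γ) :
    IsCompact (normalSlice (convexHull ℝ S) γ (∑ s ∈ S, (s - p))) := by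
  -- Pairing with the `s - p` embeds the slice into the standard simplex.
  let pairing : (ι → ℝ) →ₗ[ℝ] S → ℝ :=
    LinearMap.pi fun s => (dotProductBilin ℝ ℝ).flip (s - p)
  have hker : LinearMap.ker pairing = ⊥ := by
    refine LinearMap.ker_eq_bot'.2 fun u hu => ?_
    refine eq_zero_of_forall_dotProduct_eq (c := u ⬝ᵥ p) hS fun s hs => sub_eq_zero.1 ?_
    rw [← dotProduct_sub]
    exact congrFun hu ⟨s, hs⟩
  refine ((pairing.isClosedEmbedding_of_injective hker).isCompact_preimage
    (isCompact_stdSimplex ℝ S)).of_isClosed_subset (isClosed_normalSlice _ _ _) ?_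
  rintro u ⟨hu, hsum⟩
  refine ⟨fun s => dotProduct_sub_nonneg_of_mem_normalCone hp hu s.2, ?_⟩
  rw [dotProduct_sum, ← Finset.sum_coe_sort] at hsum
  exact hsum

lemma eq_zero_of_mem_extremePoints_normalSlice
    (hu : u ∈ (normalSlice (convexHull ℝ S) γ q).extremePoints ℝ)
    (hw : w ∈ dotProductOrthogonal (vectorSpan ℝ (minFace (convexHull ℝ S) u)))
    (hwq : w ⬝ᵥ q = 0) : w = 0 := by
  obtain ⟨⟨hγ, huq⟩, hext⟩ := mem_extremePoints_iff_left.1 hu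
  obtain ⟨ε, ⟨hadd, hsub⟩, hε⟩ : ∃ ε : ℝ,
      (minFace (convexHull ℝ S) u ⊆ minFace (convexHull ℝ S) (u + ε • w) ∧
        minFace (convexHull ℝ S) u ⊆ minFace (convexHull ℝ S) (u + ε • -w)) ∧ 0 < ε :=
    ((((eventually_minFace_subset_minFace_add_smul hw).and
      (eventually_minFace_subset_minFace_add_smul (neg_mem hw))).filter_mono
        nhdsWithin_le_nhds).and (self_mem_nhdsWithin (s := Set.Ioi 0))).exists
  rw [smul_neg, ← sub_eq_add_neg] at hsub
  have heq : u - ε • w = u := hext _ ⟨hγ.trans hsub, by simp [sub_dotProduct, huq, hwq]⟩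
    _ ⟨hγ.trans hadd, by simp [add_dotProduct, huq, hwq]⟩ (mem_openSegment_sub_add u (ε • w))
  exact (smul_eq_zero.1 (sub_eq_self.1 heq)).resolve_left hε.ne'

lemma finrank_vectorSpan_minFace_of_mem_extremePoints_normalSlice
    (hu : u ∈ (normalSlice (convexHull ℝ S) γ q).extremePoints ℝ) :
    finrank ℝ (vectorSpan ℝ (minFace (convexHull ℝ S) u)) + 1 = Fintype.card ι := by
  have huq : u ⬝ᵥ q = 1 := hu.1.2
  have hu0 : u ≠ 0 := by
    rintro rfl
    simp at huq
  have hmem := mem_dotProductOrthogonal_vectorSpan_minFace (convexHull ℝ (S : Set (ι → ℝ))) u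
  set F := minFace (convexHull ℝ (S : Set (ι → ℝ))) u
  suffices hline : finrank ℝ (dotProductOrthogonal (vectorSpan ℝ F)) = 1 by
    rw [← hline, finrank_add_finrank_dotProductOrthogonal]
  refine finrank_eq_one ⟨u, hmem⟩ (by simpa using hu0) fun ⟨w, hw⟩ => ?_
  refine ⟨w ⬝ᵥ q, Subtype.ext (sub_eq_zero.1 ?_).symm⟩
  exact eq_zero_of_mem_extremePoints_normalSlice hu
    (sub_mem hw (Submodule.smul_mem _ (w ⬝ᵥ q) hmem)) (by simp [sub_dotProduct, huq])

lemma exists_mem_normalCone_notMem_finrank_vectorSpan_minFace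
    (hS : vectorSpan ℝ (S : Set (ι → ℝ)) = ⊤) (hγ : γ.Nonempty) {C : ProperCone ℝ (ι → ℝ)}
    (hC : ¬ normalCone (convexHull ℝ S) γ ⊆ C) :
    ∃ u ∈ normalCone (convexHull ℝ S) γ, u ∉ C ∧
      finrank ℝ (vectorSpan ℝ (minFace (convexHull ℝ S) u)) + 1 = Fintype.card ι := by
  obtain ⟨p, hp⟩ := hγ
  set q := ∑ s ∈ S, (s - p)
  suffices hext : ¬ (normalSlice (convexHull ℝ S) γ q).extremePoints ℝ ⊆ C by
    obtain ⟨u, hu, huC⟩ := Set.not_subset.1 hext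
    exact ⟨u, hu.1.1, huC, finrank_vectorSpan_minFace_of_mem_extremePoints_normalSlice hu⟩
  intro hext
  have hslice : normalSlice (convexHull ℝ S) γ q ⊆ C := by
    rw [← closure_convexHull_extremePoints (isCompact_normalSlice hS hp)
      (convex_normalSlice _ _ _)]
    exact closure_minimal (convexHull_min hext C.convex) C.isClosed
  refine hC fun u hu => ?_
  obtain rfl | hu0 := eq_or_ne u 0
  · exact zero_mem C
  have hpos : 0 < u ⬝ᵥ q := dotProduct_sum_sub_pos hS hp hu hu0
  have hmem : (u ⬝ᵥ q)⁻¹ • u ∈ C :=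
    hslice ⟨smul_mem_normalCone hu (inv_nonneg.2 hpos.le), by simp [hpos.ne']⟩
  simpa [smul_smul, hpos.ne'] using C.smul_mem hmem hpos.le

end NormalCone

lemma setDim_eq_finrank_vectorSpan {n : ℕ} (s : Set (Fin n → ℝ)) :
    setDim s = finrank ℝ (vectorSpan ℝ s) := by
  rw [setDim, direction_affineSpan]

lemma vectorSpan_eq_top_of_setDim_eq {n : ℕ} {s : Set (Fin n → ℝ)} (h : setDim s = n) :
    vectorSpan ℝ s = ⊤ :=
  Submodule.eq_top_of_finrank_eq (by rw [← setDim_eq_finrank_vectorSpan, h, finrank_fin_fun])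

theorem atypical_iff_sigmaCone_not_subset_quadrant_general {n : ℕ} {S : Set (Fin n → ℝ)}
    (hS : S.Finite) (hdim : setDim (convexHull ℝ S) = n) (C : ProperCone ℝ (Fin n → ℝ))
    {γ : Set (Fin n → ℝ)} (hγ : ∃ u, minFace (convexHull ℝ S) u = γ) (hne : γ.Nonempty) :
    (∃ Γ, ((∃ u, minFace (convexHull ℝ S) u = Γ) ∧ setDim Γ + 1 = n) ∧ γ ⊆ Γ ∧
        ∀ u, u ≠ 0 → minFace (convexHull ℝ S) u = Γ → u ∉ C) ↔
      ¬ closure {u | minFace (convexHull ℝ S) u = γ} ⊆ C := by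
  lift S to Finset (Fin n → ℝ) using hS
  have hP := vectorSpan_eq_top_of_setDim_eq hdim
  have hspan : vectorSpan ℝ (S : Set (Fin n → ℝ)) = ⊤ := by
    rwa [← direction_affineSpan, affineSpan_convexHull, direction_affineSpan] at hP
  obtain ⟨u₀, rfl⟩ := hγ
  rw [closure_setOf_minFace_eq hne]
  constructor
  · rintro ⟨_, ⟨⟨u, rfl⟩, hfacet⟩, hsub, hout⟩ hσ
    have hu : u ≠ 0 := by
      rintro rfl
      rw [minFace_zero, hdim] at hfacet
      omega
    exact hout u hu rfl (hσ hsub)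
  · intro hσ
    obtain ⟨u, hu, huC, hfacet⟩ :=
      exists_mem_normalCone_notMem_finrank_vectorSpan_minFace hspan hne hσ
    refine ⟨_, ⟨⟨u, rfl⟩, by simpa [setDim_eq_finrank_vectorSpan] using hfacet⟩, hu,
      fun v hv hvu hvC => huC ?_⟩
    have hu0 : u ≠ 0 := fun h => huC (h ▸ zero_mem C)
    obtain ⟨c, hc, rfl⟩ := exists_pos_smul_eq_of_minFace_eq hP (hvu ▸ hfacet)
      (hvu ▸ hne.mono hu) hv hu0 hvu.symm
    exact C.smul_mem hvC hc.le

lemma realSupp_finite {n : ℕ} (f : MvPolynomial (Fin n) ℂ) : (realSupp f).Finite :=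
  (f.support.finite_toSet.subset fun _ hv => MvPolynomial.mem_support_iff.2 hv).image _

theorem atypical_iff_sigmaCone_not_subset_quadrant {n : ℕ} (f : MvPolynomial (Fin n) ℂ)
    (hdim : setDim (NPinf f) = n) (γ : Set (Fin n → ℝ))
    (hγ : IsFaceOf f γ) (h0 : (0 : Fin n → ℝ) ∈ γ) :
    IsAtypicalFace f γ ↔ ¬ sigmaCone f γ ⊆ firstQuadrant n :=
  (and_iff_right hγ).trans <| (and_iff_right h0).trans <|
    atypical_iff_sigmaCone_not_subset_quadrant_general ((realSupp_finite f).insert 0) hdim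
      (ProperCone.positive ℝ (Fin n → ℝ)) hγ ⟨0, h0⟩
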